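/- arXiv:2601.12059 — 2 statements merged into one kernel-verified Lean document; each statement's English description precedes it below -/
import Mathlib

section
/- Let 0 → A →f B →g C → 0 be a short exact sequence of R-modules. Then the sequence is almost pure if and only if the following holds: for every n ∈ ℕ, every finitely generated submodule K of the free module F = Rⁿ with inclusion i : K → F, and all R-linear maps α : K → A and β : F → B with f ∘ α = β ∘ i, and for every s ∈ m, there exists an R-linear map η : F → A with η ∘ i = s·α. -/
universe u

/-- A short exact sequence `0 → A →f B → C → 0` is almost pure if for every module `M`
the kernel of `M ⊗ A → M ⊗ B` is almost zero. -/
def IsAlmostPure {R : Type u} [CommRing R] (m : Ideal R)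
    {A B : Type u} [AddCommGroup A] [Module R A] [AddCommGroup B] [Module R B]
    (f : A →ₗ[R] B) : Prop :=
  ∀ (M : Type u) [AddCommGroup M] [Module R M],
    ∀ s ∈ m, ∀ x ∈ LinearMap.ker (LinearMap.lTensor M f), s • x = 0

open TensorProduct in
theorem aux_exists_sum {R M N : Type*} [CommRing R] [AddCommGroup M] [Module R M]
    [AddCommGroup N] [Module R N] {p : ℕ} (v : Fin p → M)
    (hv : Submodule.span R (Set.range v) = ⊤) (x : M ⊗[R] N) :
    ∃ a : Fin p → N, x = ∑ i, v i ⊗ₜ[R] a i := by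
  induction x with
  | zero => exact ⟨0, by simp⟩
  | tmul y z =>
    have hy : y ∈ Submodule.span R (Set.range v) := hv ▸ Submodule.mem_top
    obtain ⟨c, rfl⟩ := (Submodule.mem_span_range_iff_exists_fun R).mp hy
    exact ⟨fun i => c i • z, by simp [sum_tmul, smul_tmul]⟩
  | add x y hx hy =>
    obtain ⟨a, rfl⟩ := hx
    obtain ⟨b, rfl⟩ := hy
    exact ⟨a + b, by simp [tmul_add, Finset.sum_add_distrib]⟩

open TensorProduct in
theorem aux_forward {R : Type u} [CommRing R] (m : Ideal R)
    {A B : Type u} [AddCommGroup A] [Module R A] [AddCommGroup B] [Module R B]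
    (f : A →ₗ[R] B) (h : IsAlmostPure m f)
    (n : ℕ) (K : Submodule R (Fin n → R)) (hK : K.FG)
    (α : K →ₗ[R] A) (β : (Fin n → R) →ₗ[R] B) (hc : f ∘ₗ α = β ∘ₗ K.subtype)
    (s : R) (hs : s ∈ m) :
    ∃ η : (Fin n → R) →ₗ[R] A, η ∘ₗ K.subtype = s • α := by
  have : Module.Finite R K := Module.Finite.iff_fg.mpr hK
  obtain ⟨p, k, hk⟩ := Module.Finite.exists_fin (R := R) (M := K)
  let W : Submodule R (Fin p → R) :=
    Submodule.span R (Set.range fun (j : Fin n) (i : Fin p) => (k i : Fin n → R) j)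
  let v : Fin p → (Fin p → R) ⧸ W := fun i => W.mkQ (Pi.single i 1)
  have hvsum : ∀ c : Fin p → R, ∑ i, c i • v i = W.mkQ c := by
    intro c
    simp only [v, ← map_smul, ← map_sum]
    congr 1
    ext i
    simp [Finset.sum_apply, Pi.single_apply]
  have hv : Submodule.span R (Set.range v) = ⊤ := by
    rw [eq_top_iff]
    rintro y -
    obtain ⟨c, rfl⟩ := W.mkQ_surjective y
    exact (Submodule.mem_span_range_iff_exists_fun R).mpr ⟨c, hvsum c⟩
  have hβ : ∀ z : Fin n → R, β z = ∑ j, z j • β (Pi.single j 1) := by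
    intro z
    convert LinearMap.pi_apply_eq_sum_univ β z using 4
    ext
    simp [Pi.single_apply, eq_comm]
  have hx := h _ s hs (∑ i, v i ⊗ₜ[R] α (k i)) (by
    rw [LinearMap.mem_ker, map_sum]
    simp only [LinearMap.lTensor_tmul]
    apply sum_tmul_eq_zero_of_vanishesTrivially
    refine ⟨n, fun i j => (k i : Fin n → R) j, fun j => β (Pi.single j 1), ?_, ?_⟩
    · intro i
      rw [← hβ]
      exact LinearMap.congr_fun hc (k i)
    · intro j
      rw [hvsum]
      simp only [Submodule.mkQ_apply, Submodule.Quotient.mk_eq_zero]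
      exact Submodule.subset_span ⟨j, rfl⟩)
  rw [Finset.smul_sum] at hx
  simp only [← tmul_smul] at hx
  obtain ⟨q, d, y, hy, hd⟩ := vanishesTrivially_of_sum_tmul_eq_zero R hv hx
  have hr : ∀ l, ∃ r : Fin n → R, ∑ j, r j • (fun i : Fin p => (k i : Fin n → R) j)
      = fun i => d i l := by
    intro l
    have := hd l
    rw [hvsum fun i => d i l] at this
    simp only [Submodule.mkQ_apply, Submodule.Quotient.mk_eq_zero] at this
    exact (Submodule.mem_span_range_iff_exists_fun R).mp this
  choose r hr using hr
  refine ⟨Fintype.linearCombination R fun j => ∑ l, r l j • y l, ?_⟩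
  apply LinearMap.ext_on_range hk
  intro i
  simp only [LinearMap.comp_apply, Submodule.subtype_apply, LinearMap.smul_apply, hy,
    Fintype.linearCombination_apply, Finset.smul_sum]
  rw [Finset.sum_comm]
  refine Finset.sum_congr rfl fun l _ => ?_
  rw [← congrFun (hr l) i]
  simp only [Finset.sum_apply, Pi.smul_apply, smul_eq_mul, Finset.sum_smul, smul_smul]
  exact Finset.sum_congr rfl fun j _ => by rw [mul_comm]

open TensorProduct in
theorem aux_fg {R : Type u} [CommRing R]
    {A B : Type u} [AddCommGroup A] [Module R A] [AddCommGroup B] [Module R B]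
    (f : A →ₗ[R] B) (hf : Function.Injective f)
    (s : R) (h : ∀ (n : ℕ) (K : Submodule R (Fin n → R)), K.FG →
        ∀ (α : K →ₗ[R] A) (β : (Fin n → R) →ₗ[R] B), f ∘ₗ α = β ∘ₗ K.subtype →
          ∃ η : (Fin n → R) →ₗ[R] A, η ∘ₗ K.subtype = s • α)
    (M : Type u) [AddCommGroup M] [Module R M] [Module.Finite R M] (x : M ⊗[R] A)
    (hx : LinearMap.lTensor M f x = 0) : s • x = 0 := by
  obtain ⟨p, v, hv⟩ := Module.Finite.exists_fin (R := R) (M := M)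
  obtain ⟨a, rfl⟩ := aux_exists_sum v hv x
  rw [map_sum] at hx
  simp only [LinearMap.lTensor_tmul] at hx
  obtain ⟨n, c, y, hy, hc⟩ := vanishesTrivially_of_sum_tmul_eq_zero R hv hx
  let β : (Fin n → R) →ₗ[R] B := Fintype.linearCombination R y
  let K : Submodule R (Fin n → R) := Submodule.span R (Set.range c)
  have hβc : ∀ i, β (c i) = f (a i) := fun i => by
    refine Eq.trans ?_ (hy i).symm
    simp [β, Fintype.linearCombination_apply]
  have hKr : ∀ z : K, (β ∘ₗ K.subtype) z ∈ LinearMap.range f := by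
    rintro ⟨z, hz⟩
    have : K ≤ (LinearMap.range f).comap β := by
      refine Submodule.span_le.mpr ?_
      rintro _ ⟨i, rfl⟩
      exact ⟨a i, (hβc i).symm⟩
    exact this hz
  let α : K →ₗ[R] A := (LinearEquiv.ofInjective f hf).symm.toLinearMap ∘ₗ
    (β ∘ₗ K.subtype).codRestrict (LinearMap.range f) hKr
  have hfα : f ∘ₗ α = β ∘ₗ K.subtype := by
    ext1 z
    exact congrArg Subtype.val ((LinearEquiv.ofInjective f hf).apply_symm_apply
      ((β ∘ₗ K.subtype).codRestrict (LinearMap.range f) hKr z))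
  obtain ⟨η, hη⟩ := h n K (Submodule.fg_span (Set.finite_range c)) α β hfα
  rw [Finset.smul_sum]
  simp only [← tmul_smul]
  apply sum_tmul_eq_zero_of_vanishesTrivially
  refine ⟨n, c, fun j => η (Pi.single j 1), fun i => ?_, hc⟩
  have hci : c i ∈ K := Submodule.subset_span ⟨i, rfl⟩
  have h1 : α ⟨c i, hci⟩ = a i := hf ((LinearMap.congr_fun hfα ⟨c i, hci⟩).trans (hβc i))
  have h2 := LinearMap.congr_fun hη ⟨c i, hci⟩
  simp only [LinearMap.comp_apply, Submodule.subtype_apply, LinearMap.smul_apply, h1] at h2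
  refine h2.symm.trans ?_
  convert LinearMap.pi_apply_eq_sum_univ η (c i) using 4
  ext
  simp [Pi.single_apply, eq_comm]

/-- Almost purity via the lifting property against inclusions of
finitely generated submodules of finite free modules. -/
theorem almostPure_iff_lifting
    {R : Type u} [CommRing R] (m : Ideal R) (hm : m * m = m)
    {A B C : Type u} [AddCommGroup A] [Module R A] [AddCommGroup B] [Module R B]
    [AddCommGroup C] [Module R C]
    (f : A →ₗ[R] B) (g : B →ₗ[R] C)
    (hf : Function.Injective f) (hg : Function.Surjective g)
    (hfg : LinearMap.range f = LinearMap.ker g) :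
    IsAlmostPure m f ↔
      (∀ (n : ℕ) (K : Submodule R (Fin n → R)), K.FG →
        ∀ (α : K →ₗ[R] A) (β : (Fin n → R) →ₗ[R] B), f ∘ₗ α = β ∘ₗ K.subtype →
          ∀ s ∈ m, ∃ η : (Fin n → R) →ₗ[R] A, η ∘ₗ K.subtype = s • α) := by
  constructor
  · intro h n K hK α β hc s hs
    exact aux_forward m f h n K hK α β hc s hs
  · intro h M _ _ s hs x hx
    obtain ⟨P, hP, hxP⟩ := TensorProduct.exists_finite_submodule_left_of_setFinite
      {x} (Set.finite_singleton x)
    obtain ⟨t, rfl⟩ := hxP rfl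
    have h0 : LinearMap.rTensor B P.subtype (LinearMap.lTensor P f t) = 0 := by
      rw [← LinearMap.mem_ker.mp hx, ← LinearMap.comp_apply, ← LinearMap.comp_apply,
        LinearMap.rTensor_comp_lTensor, LinearMap.lTensor_comp_rTensor]
    obtain ⟨Q, hPQ, hQ, h1⟩ := TensorProduct.eq_zero_of_fg_of_subtype_eq_zero
      (Module.Finite.iff_fg.mp hP) h0
    have : Module.Finite R Q := Module.Finite.iff_fg.mpr hQ
    have h2 := aux_fg f hf s (fun n K hK α β hc => h n K hK α β hc s hs) Q
      (LinearMap.rTensor A (Submodule.inclusion hPQ) t) (by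
        rw [← h1, ← LinearMap.comp_apply, ← LinearMap.comp_apply,
          LinearMap.rTensor_comp_lTensor, LinearMap.lTensor_comp_rTensor])
    have h3 := congrArg (LinearMap.rTensor A Q.subtype) h2
    rw [map_smul, map_zero, ← LinearMap.comp_apply, ← LinearMap.rTensor_comp,
      Submodule.subtype_comp_inclusion] at h3
    exact h3
end

section
/- Let (M_i)_{i∈I} be a family of almost absolutely pure R-modules. Then both the direct product ∏_{i∈I} M_i and the direct sum ⊕_{i∈I} M_i are almost absolutely pure. -/
universe u

open CategoryTheory DirectSum

/-- A module `E` is almost absolutely pure if `Ext¹ᴿ(N, E)` is almost zero for every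
finitely presented module `N`. -/
def IsAlmostAbsolutelyPure {R : Type u} [CommRing R] (m : Ideal R)
    (E : Type u) [AddCommGroup E] [Module R E] : Prop :=
  ∀ (N : Type u) [AddCommGroup N] [Module R N], Module.FinitePresentation R N →
    ∀ s ∈ m, ∀ x : ((Ext R (ModuleCat.{u} R) 1).obj
        (Opposite.op (ModuleCat.of R N))).obj (ModuleCat.of R E),
      s • x = 0

def Crit {R : Type u} [CommRing R] (s : R) {F N : Type u} [AddCommGroup F] [Module R F]
    [AddCommGroup N] [Module R N] (p : F →ₗ[R] N) (E : Type u) [AddCommGroup E] [Module R E] : Prop :=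
  ∀ h : LinearMap.ker p →ₗ[R] E, ∃ g : F →ₗ[R] E, ∀ x : LinearMap.ker p, g x = s • h x

section
variable {R : Type u} [CommRing R] (s : R) {F F' N E : Type u} [AddCommGroup F] [Module R F]
    [AddCommGroup N] [Module R N] [AddCommGroup E] [Module R E] [AddCommGroup F'] [Module R F']

theorem Crit.trans [Module.Projective R F] [Module.Projective R F']
    (p : F →ₗ[R] N) (p' : F' →ₗ[R] N)
    (hp : Function.Surjective p) (hp' : Function.Surjective p') (H : Crit s p E) : Crit s p' E := by
  intro h
  obtain ⟨a, ha⟩ := Module.projective_lifting_property p p' hp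
  obtain ⟨b, hb⟩ := Module.projective_lifting_property p' p hp'
  have ha' (x) : p (a x) = p' x := LinearMap.congr_fun ha x
  have hb' (x) : p' (b x) = p x := LinearMap.congr_fun hb x
  let b' : LinearMap.ker p →ₗ[R] LinearMap.ker p' :=
    b.restrict (by intro x hx; simpa [hb'] using hx)
  let c : F' →ₗ[R] LinearMap.ker p' :=
    (b ∘ₗ a - LinearMap.id).codRestrict _ (by intro x; simp [ha', hb'])
  obtain ⟨g, hg⟩ := H (h ∘ₗ b')
  refine ⟨g ∘ₗ a - s • (h ∘ₗ c), fun x => ?_⟩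
  have hx : p (a x) = 0 := by rw [ha']; exact x.2
  have h1 := hg ⟨a x, hx⟩
  have h2 : b' ⟨a x, hx⟩ = c x + x := by
    ext; simp [b', c]
  simp only [LinearMap.comp_apply, h2, map_add, smul_add] at h1
  simp [h1]

theorem Crit.pi {ι : Type u} (M : ι → Type u) [∀ i, AddCommGroup (M i)] [∀ i, Module R (M i)]
    (p : F →ₗ[R] N) (H : ∀ i, Crit s p (M i)) : Crit s p (∀ i, M i) := by
  intro h
  choose g hg using fun i => H i (LinearMap.proj i ∘ₗ h)
  refine ⟨LinearMap.pi g, fun x => ?_⟩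
  ext i
  simp [hg]

theorem Crit.directSum {ι : Type u} (M : ι → Type u) [∀ i, AddCommGroup (M i)] [∀ i, Module R (M i)]
    (p : F →ₗ[R] N) (hk : (LinearMap.ker p).FG) (H : ∀ i, Crit s p (M i)) :
    Crit s p (⨁ i, M i) := by
  classical
  intro h
  have : ∃ S : Finset ι, ∀ x, ∀ i ∉ S, h x i = 0 := by
    have := Module.Finite.iff_fg.2 hk
    obtain ⟨T, hT⟩ := this.fg_top
    refine ⟨T.biUnion fun t => (h t).support, fun x i hi => ?_⟩
    have hx : x ∈ Submodule.span R (T : Set (LinearMap.ker p)) := hT ▸ Submodule.mem_top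
    induction hx using Submodule.span_induction with
    | mem x hx =>
      by_contra hne
      exact hi (Finset.mem_biUnion.2 ⟨x, hx, by simpa using hne⟩)
    | zero => simp
    | add x y _ _ hx hy => simp [hx, hy]
    | smul a x _ hx => rw [map_smul, DirectSum.smul_apply, hx, smul_zero]
  obtain ⟨S, hS⟩ := this
  choose g hg using fun i => H i (DirectSum.component R ι M i ∘ₗ h)
  refine ⟨∑ i ∈ S, DirectSum.lof R ι M i ∘ₗ g i, fun x => ?_⟩
  ext i
  have e : ∀ j, DirectSum.component R ι M i (DirectSum.lof R ι M j (g j x)) =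
      if i = j then g i x else 0 := by
    intro j
    split_ifs with hij
    · subst hij; simp [DirectSum.component.lof_self]
    · rw [DirectSum.component.of, dif_neg (Ne.symm hij)]
  have : ((∑ j ∈ S, DirectSum.lof R ι M j ∘ₗ g j) (x : F)) i
    = if i ∈ S then g i x else 0 := by
    change DirectSum.component R ι M i _ = _
    simp [LinearMap.sum_apply, e]
  rw [this]
  split_ifs with hi
  · rw [hg, DirectSum.smul_apply]; rfl
  · rw [DirectSum.smul_apply, hS x i hi, smul_zero]

end

theorem shortComplex_smul {R : Type u} [CommRing R] (s : R) (S : ShortComplex (ModuleCat.{u} R)) :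
    (∀ y : S.homology, s • y = 0) ↔ ∀ f : S.X₂, S.g f = 0 → ∃ g : S.X₁, S.f g = s • f := by
  let e : S.homology ≃ₗ[R] (LinearMap.ker S.g.hom ⧸ LinearMap.range S.moduleCatToCycles) :=
    S.moduleCatHomologyIso.toLinearEquiv
  have h1 : (∀ y : S.homology, s • y = 0) ↔ ∀ y : (LinearMap.ker S.g.hom ⧸ LinearMap.range S.moduleCatToCycles), s • y = 0 := by
    constructor
    · intro H y
      apply e.symm.injective
      simp [H]
    · intro H y
      apply e.injective
      rw [map_smul, H, map_zero]
  rw [h1]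
  constructor
  · intro H f hf
    have := H (Submodule.Quotient.mk ⟨f, hf⟩)
    rw [← Submodule.Quotient.mk_smul] at this
    obtain ⟨g, hg⟩ := (Submodule.Quotient.mk_eq_zero _).1 this
    exact ⟨g, congrArg Subtype.val hg⟩
  · intro H y
    obtain ⟨⟨f, hf⟩, rfl⟩ := Submodule.Quotient.mk_surjective _ y
    obtain ⟨g, hg⟩ := H f hf
    rw [← Submodule.Quotient.mk_smul]
    exact (Submodule.Quotient.mk_eq_zero _).2 ⟨g, Subtype.ext hg⟩

theorem ext_iff_res {R : Type u} [CommRing R] (s : R) (N E : ModuleCat.{u} R)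
    (P : ProjectiveResolution N) :
    (∀ x : ((Ext R (ModuleCat.{u} R) 1).obj (Opposite.op N)).obj E, s • x = 0) ↔
    ∀ f : P.complex.X 1 ⟶ E, P.complex.d 2 1 ≫ f = 0 →
      ∃ g : P.complex.X 0 ⟶ E, P.complex.d 1 0 ≫ g = s • f := by
  let K := P.complex.linearYonedaObj R E
  let e := (P.isoExt (R := R) 1 E ≪≫
    ShortComplex.homologyMapIso (K.isoSc' 0 1 2 (by simp) (by simp))).toLinearEquiv
  have h1 : (∀ x : ((Ext R (ModuleCat.{u} R) 1).obj (Opposite.op N)).obj E, s • x = 0) ↔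
      ∀ y : (K.sc' 0 1 2).homology, s • y = 0 := by
    constructor
    · intro H y
      apply e.symm.injective
      rw [map_smul, H, map_zero]
    · intro H y
      apply e.injective
      rw [map_smul, H, map_zero]
  rw [h1, shortComplex_smul]
  exact Iff.rfl

theorem crit_iff_res {R : Type u} [CommRing R] (s : R) {A B C N E : Type u}
    [AddCommGroup A] [Module R A] [AddCommGroup B] [Module R B] [AddCommGroup C] [Module R C]
    [AddCommGroup N] [Module R N] [AddCommGroup E] [Module R E]
    (d2 : A →ₗ[R] B) (d : B →ₗ[R] C) (π : C →ₗ[R] N)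
    (ex1 : Function.Exact d2 d) (ex0 : Function.Exact d π) :
    (∀ f : B →ₗ[R] E, f ∘ₗ d2 = 0 → ∃ g : C →ₗ[R] E, g ∘ₗ d = s • f) ↔ Crit s π E := by
  let d1 : B →ₗ[R] LinearMap.ker π := d.codRestrict _ (fun x => ex0.apply_apply_eq_zero x)
  have hd1 : Function.Surjective d1 := fun ⟨x, hx⟩ => by
    obtain ⟨y, hy⟩ := (ex0 x).1 hx
    exact ⟨y, Subtype.ext hy⟩
  constructor
  · intro H h
    obtain ⟨g, hg⟩ := H (h ∘ₗ d1) (by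
      ext x
      have : d1 (d2 x) = 0 := Subtype.ext (ex1.apply_apply_eq_zero x)
      simp [this])
    refine ⟨g, fun x => ?_⟩
    obtain ⟨y, rfl⟩ := hd1 x
    exact LinearMap.congr_fun hg y
  · intro H f hf
    have hk : LinearMap.ker d1 ≤ LinearMap.ker f := by
      intro x hx
      obtain ⟨y, rfl⟩ := (ex1 x).1 (congrArg Subtype.val hx)
      exact LinearMap.congr_fun hf y
    obtain ⟨g, hg⟩ := H ((LinearMap.ker d1).liftQ f hk ∘ₗ
      (d1.quotKerEquivOfSurjective hd1).symm.toLinearMap)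
    refine ⟨g, ?_⟩
    ext x
    refine (hg (d1 x)).trans ?_
    have : (d1.quotKerEquivOfSurjective hd1).symm (d1 x) = Submodule.Quotient.mk x := by
      rw [LinearEquiv.symm_apply_eq]; rfl
    simp only [LinearMap.comp_apply, LinearEquiv.coe_coe, this]
    rfl

theorem ext_iff_crit {R : Type u} [CommRing R] (s : R) (N E : ModuleCat.{u} R)
    (P : ProjectiveResolution N) :
    (∀ x : ((Ext R (ModuleCat.{u} R) 1).obj (Opposite.op N)).obj E, s • x = 0) ↔
    Crit s (F := P.complex.X 0) (N := N) (P.π.f 0).hom E := by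
  have ex0 := (ShortComplex.ShortExact.moduleCat_exact_iff_function_exact _).1 P.exact₀
  have ex1 := (ShortComplex.ShortExact.moduleCat_exact_iff_function_exact _).1 (P.exact_succ 0)
  refine (ext_iff_res s N E P).trans (Iff.trans ?_ (crit_iff_res s (E := E)
    (P.complex.d 2 1).hom (P.complex.d 1 0).hom _ ex1 ex0))
  constructor
  · intro H f hf
    obtain ⟨g, hg⟩ := H (ModuleCat.ofHom f) (ModuleCat.hom_ext hf)
    exact ⟨g.hom, congrArg ModuleCat.Hom.hom hg⟩
  · intro H f hf
    obtain ⟨g, hg⟩ := H f.hom (congrArg ModuleCat.Hom.hom hf)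
    exact ⟨ModuleCat.ofHom g, ModuleCat.hom_ext hg⟩

theorem ext_iff_crit' {R : Type u} [CommRing R] (s : R) (N E F : Type u)
    [AddCommGroup F] [Module R F] [Module.Projective R F]
    [AddCommGroup N] [Module R N] [AddCommGroup E] [Module R E]
    (p : F →ₗ[R] N) (hp : Function.Surjective p) :
    (∀ x : ((Ext R (ModuleCat.{u} R) 1).obj
      (Opposite.op (ModuleCat.of R N))).obj (ModuleCat.of R E), s • x = 0) ↔ Crit s p E := by
  let P := projectiveResolution (ModuleCat.of R N)
  rw [ext_iff_crit s _ _ P]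
  have : Module.Projective R (P.complex.X 0) :=
    (IsProjective.iff_projective _).2 (P.projective 0)
  have hs : Function.Surjective (P.π.f 0).hom :=
    (ModuleCat.epi_iff_surjective (P.π.f 0)).1 inferInstance
  exact ⟨Crit.trans s (N := N) _ p hs hp, Crit.trans s (N := N) p _ hp hs⟩


/-- Direct products and direct sums of almost absolutely pure
modules are almost absolutely pure. -/
theorem prod_and_directSum_almostAbsolutelyPure
    {R : Type u} [CommRing R] (m : Ideal R) (hm : m * m = m)
    (ι : Type u) (M : ι → Type u) [∀ i, AddCommGroup (M i)] [∀ i, Module R (M i)]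
    (hM : ∀ i, IsAlmostAbsolutelyPure m (M i)) :
    IsAlmostAbsolutelyPure m (∀ i, M i) ∧ IsAlmostAbsolutelyPure m (⨁ i, M i) := by
  constructor
  · intro N _ _ hN s hs
    obtain ⟨n, p, hp⟩ := Module.Finite.exists_fin' R N
    rw [ext_iff_crit' s N _ _ p hp]
    exact Crit.pi s M p fun i => (ext_iff_crit' s N _ _ p hp).1 (hM i N hN s hs)
  · intro N _ _ hN s hs
    obtain ⟨n, p, hp⟩ := Module.Finite.exists_fin' R N
    rw [ext_iff_crit' s N _ _ p hp]
    exact Crit.directSum s M p (Module.FinitePresentation.fg_ker p hp)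
      fun i => (ext_iff_crit' s N _ _ p hp).1 (hM i N hN s hs)
end
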